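/- The Killing form of a complex semisimple Lie algebra is negative definite on the compact real form u spanned over ℝ by X_α − X_{−α}, i(X_α + X_{−α}) (α positive) and iH_α (α simple). -/

import Mathlib

/-- A Chevalley basis datum for a complex semisimple Lie algebra `L`: a root system `roots` in a
real vector space `V`, with positive roots, simple roots, root vectors `X α`, coroot elements
`H α = [X α, X (-α)]`, integral structure constants `N α β` and Cartan integers `pair β α`,
satisfying the standard Chevalley relations, such that the `X α` and `H α` span `L`. -/
structure ChevalleyBasis (V : Type*) [AddCommGroup V] [Module ℝ V]
    (L : Type*) [LieRing L] [LieAlgebra ℂ L] where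
  /-- The set of roots. -/
  roots : Set V
  /-- The set of positive roots. -/
  posRoots : Set V
  /-- The set of simple roots. -/
  simples : Set V
  /-- The root vectors. -/
  X : V → L
  /-- The coroot elements of the Cartan subalgebra. -/
  H : V → L
  /-- The structure constants. -/
  N : V → V → ℤ
  /-- The Cartan integers `pair β α = β(H α)`. -/
  pair : V → V → ℤ
  posRoots_subset : posRoots ⊆ roots
  simples_subset : simples ⊆ posRoots
  roots_eq_union : roots = posRoots ∪ (-posRoots)
  neg_mem : ∀ α ∈ roots, -α ∈ roots
  zero_not_mem : (0 : V) ∉ roots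
  X_ne_zero : ∀ α ∈ roots, X α ≠ 0
  coroot_def : ∀ α ∈ roots, ⁅X α, X (-α)⁆ = H α
  pair_self : ∀ α ∈ roots, pair α α = 2
  lie_H_X : ∀ α ∈ roots, ∀ β ∈ roots, ⁅H α, X β⁆ = (pair β α : ℂ) • X β
  lie_H_H : ∀ α ∈ roots, ∀ β ∈ roots, ⁅H α, H β⁆ = 0
  lie_X_X_of_mem : ∀ α ∈ roots, ∀ β ∈ roots, α + β ∈ roots →
    ⁅X α, X β⁆ = (N α β : ℂ) • X (α + β)
  lie_X_X_of_not_mem : ∀ α ∈ roots, ∀ β ∈ roots, α + β ∉ roots → α + β ≠ 0 →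
    ⁅X α, X β⁆ = 0
  span_eq_top : Submodule.span ℂ ((X '' roots) ∪ (H '' roots)) = ⊤

variable {V : Type*} [AddCommGroup V] [Module ℝ V]
  {L : Type*} [LieRing L] [LieAlgebra ℂ L]
variable [Module ℝ L] [IsScalarTower ℝ ℂ L] [Module.Finite ℂ L]

/-- The generators of the compact real form: `Y_α = X_α - X_{-α}`, `Z_α = i(X_α + X_{-α})` for
positive roots `α` and `W_α = i H_α` for simple roots `α`. -/
def compactFormGenerators (C : ChevalleyBasis V L) : Set L :=
  {l | ∃ α ∈ C.posRoots, l = C.X α - C.X (-α)} ∪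
  {l | ∃ α ∈ C.posRoots, l = Complex.I • (C.X α + C.X (-α))} ∪
  {l | ∃ α ∈ C.simples, l = Complex.I • C.H α}

/-!
Write an element of the compact form as `∑ c α • X α + i • h` with `c (-α) = -conj (c α)` and `h` a
real combination of coroots. Root vectors `X α` and `X β` are Killing-orthogonal unless `α = -β`,
and they are orthogonal to the coroots, so the Killing form takes the value
`-∑ |c α|² κ(X α, X (-α)) - κ(h, h)`. Since `ad h` is diagonalizable with real eigenvalues,
`κ(h, h)` is positive unless `ad h = 0`; applied to `H α`, invariance then gives
`κ(X α, X (-α)) > 0`.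

It remains to see that the centre is trivial. The relations show that `𝔤` is perfect and that the
radical of `κ` is central. Hence every linear form `f` gives an endomorphism `D` with
`κ(D x, y) = f ⁅x, y⁆`; it is a derivation modulo the centre, and so `tr (D ∘ ad z) = f z`, first on
brackets and then for all `z`. If `z` is central, the left side vanishes for every `f`.
-/

open LieAlgebra
open scoped ComplexOrder ComplexConjugate

attribute [local instance] LieRing.ofAssociativeRing

section Trace

theorem trace_comp_self_pos_of_real_eigenvectors {𝕜 M : Type*} [RCLike 𝕜] [AddCommGroup M]
    [Module 𝕜 M] [Module.Finite 𝕜 M] {S : Set M} (hS : Submodule.span 𝕜 S = ⊤)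
    {f : Module.End 𝕜 M} (hf : ∀ v ∈ S, ∃ r : ℝ, f v = (r : 𝕜) • v) (hf0 : f ≠ 0) :
    0 < LinearMap.trace 𝕜 M (f ∘ₗ f) := by
  classical
  let b := Module.Basis.ofSpan hS.ge
  have : Fintype _ := FiniteDimensional.fintypeBasisIndex b
  choose r hr using fun i ↦ hf (b i) (Module.Basis.ofSpan_subset hS.ge ⟨i, rfl⟩)
  have htrace : LinearMap.trace 𝕜 M (f ∘ₗ f) = ((∑ i, r i ^ 2 : ℝ) : 𝕜) := by
    simp [LinearMap.trace_eq_matrix_trace 𝕜 b, Matrix.trace, LinearMap.toMatrix_apply, hr, sq,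
      RCLike.real_smul_eq_coe_mul]
  obtain ⟨i, hi⟩ : ∃ i, r i ≠ 0 := by
    by_contra! h
    exact hf0 (b.ext fun i ↦ by simp [hr, h])
  rw [htrace, RCLike.ofReal_pos]
  exact Finset.sum_pos' (fun j _ ↦ sq_nonneg (r j)) ⟨i, Finset.mem_univ i, by positivity⟩

end Trace

section Perfect

variable {K 𝔤 : Type*} [Field K] [LieRing 𝔤] [LieAlgebra K 𝔤]

theorem exists_end_killingForm_eq_dual_lie [Module.Finite K 𝔤]
    (hker : LieIdeal.killingCompl K 𝔤 ⊤ ≤ center K 𝔤) (f : Module.Dual K 𝔤) :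
    ∃ D : Module.End K 𝔤, ∀ x y, killingForm K 𝔤 (D x) y = f ⁅x, y⁆ := by
  let g : 𝔤 →ₗ[K] Module.Dual K 𝔤 := (ad K 𝔤).toLinearMap.compr₂ f
  have hg (x : 𝔤) : g x ∈ LinearMap.range (killingForm K 𝔤) := by
    have hrange : LinearMap.range (killingForm K 𝔤) =
        (LinearMap.ker (killingForm K 𝔤)).dualAnnihilator := by
      rw [LinearMap.dualAnnihilator_ker_eq_range_flip, LieModule.traceForm_flip]
    rw [hrange, ← LieIdeal.coe_killingCompl_top, Submodule.mem_dualAnnihilator]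
    intro z hz
    have hxz : ⁅x, z⁆ = 0 := hker hz x
    simp [g, hxz]
  obtain ⟨D, hD⟩ := Module.projective_lifting_property (killingForm K 𝔤).rangeRestrict
    (g.codRestrict _ hg) (killingForm K 𝔤).surjective_rangeRestrict
  exact ⟨D, fun x y ↦ congr($hD x |>.val y)⟩

theorem leibniz_defect_mem_center {f : Module.Dual K 𝔤} {D : Module.End K 𝔤}
    (hker : LieIdeal.killingCompl K 𝔤 ⊤ ≤ center K 𝔤)
    (hD : ∀ x y, killingForm K 𝔤 (D x) y = f ⁅x, y⁆) (a b : 𝔤) :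
    D ⁅a, b⁆ - ⁅D a, b⁆ - ⁅a, D b⁆ ∈ center K 𝔤 := by
  refine hker (LieIdeal.mem_killingCompl _ _ _ |>.2 fun z _ ↦ ?_)
  rw [LieModule.traceForm_comm, ← lie_skew a (D b)]
  simp only [map_sub, map_neg, LinearMap.sub_apply, LinearMap.neg_apply,
    LieModule.traceForm_apply_lie_apply K 𝔤 𝔤 (D _), hD, lie_lie]
  ring

theorem trace_mul_ad_lie {D : Module.End K 𝔤} {a : 𝔤}
    (hD : ∀ y, D ⁅a, y⁆ - ⁅D a, y⁆ - ⁅a, D y⁆ ∈ center K 𝔤) (b : 𝔤) :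
    LinearMap.trace K 𝔤 (D * ad K 𝔤 ⁅a, b⁆) = killingForm K 𝔤 (D a) b := by
  set E : Module.End K 𝔤 := D * ad K 𝔤 a - ad K 𝔤 (D a) - ad K 𝔤 a * D with hE
  have hbE : ad K 𝔤 b * E = 0 := LinearMap.ext fun y ↦ hD y b
  have key : D * ad K 𝔤 ⁅a, b⁆ = ad K 𝔤 (D a) * ad K 𝔤 b + E * ad K 𝔤 b
      + (ad K 𝔤 a * (D * ad K 𝔤 b) - D * ad K 𝔤 b * ad K 𝔤 a) := by
    rw [LieHom.map_lie, Ring.lie_def, hE]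
    noncomm_ring
  rw [key, map_add, map_add, map_sub, LinearMap.trace_mul_comm K E, hbE,
    LinearMap.trace_mul_comm K (ad K 𝔤 a), sub_self, map_zero, add_zero, add_zero]
  rfl

theorem isKilling_of_perfect_of_killingCompl_le_center [Module.Finite K 𝔤]
    (hperf : ⁅(⊤ : LieIdeal K 𝔤), (⊤ : LieIdeal K 𝔤)⁆ = ⊤)
    (hker : LieIdeal.killingCompl K 𝔤 ⊤ ≤ center K 𝔤) : IsKilling K 𝔤 := by
  refine ⟨eq_bot_iff.2 fun z hz ↦ ?_⟩
  rw [LieSubmodule.mem_bot, ← Module.forall_dual_apply_eq_zero_iff K]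
  intro f
  obtain ⟨D, hD⟩ := exists_end_killingForm_eq_dual_lie hker f
  have hspan : Submodule.span K {z : 𝔤 | ∃ x ∈ (⊤ : LieIdeal K 𝔤), ∃ y ∈ (⊤ : LieIdeal K 𝔤),
      ⁅x, y⁆ = z} = ⊤ := by
    rw [← LieSubmodule.lieIdeal_oper_eq_linear_span', hperf, LieSubmodule.top_toSubmodule]
  have htrace : LinearMap.trace K 𝔤 ∘ₗ LinearMap.mulLeft K D ∘ₗ (ad K 𝔤).toLinearMap = f := by
    refine LinearMap.ext_on hspan ?_
    rintro _ ⟨a, -, b, -, rfl⟩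
    exact (trace_mul_ad_lie (leibniz_defect_mem_center hker hD a) b).trans (hD a b)
  have hadz : ad K 𝔤 z = 0 := LinearMap.ext fun y ↦ by
    rw [ad_apply, ← lie_skew, hker hz y, neg_zero, LinearMap.zero_apply]
  simp [← htrace, hadz]

end Perfect

namespace ChevalleyBasis

variable {V 𝔤 : Type*} [AddCommGroup V] [Module ℝ V] [LieRing 𝔤] [LieAlgebra ℂ 𝔤]
  (C : ChevalleyBasis V 𝔤)

section Relations

variable {C} {α β γ : V}

theorem lie_H_X_self (hα : α ∈ C.roots) : ⁅C.H α, C.X α⁆ = (2 : ℂ) • C.X α := by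
  simp [C.lie_H_X α hα α hα, C.pair_self α hα]

theorem lie_H_X_self_ne_zero (hα : α ∈ C.roots) : ⁅C.H α, C.X α⁆ ≠ 0 := by
  simp [lie_H_X_self hα, C.X_ne_zero α hα]

theorem H_ne_zero (hα : α ∈ C.roots) : C.H α ≠ 0 := fun h ↦
  lie_H_X_self_ne_zero hα (by rw [h, zero_lie])

theorem H_neg (hα : α ∈ C.roots) : C.H (-α) = -C.H α := by
  rw [← C.coroot_def α hα, ← C.coroot_def _ (C.neg_mem α hα), neg_neg, lie_skew]

theorem isSl2Triple (hα : α ∈ C.roots) : IsSl2Triple (C.H α) (C.X α) (C.X (-α)) where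
  h_ne_zero := H_ne_zero hα
  lie_e_f := C.coroot_def α hα
  lie_h_e_nsmul := by rw [lie_H_X_self hα, ofNat_smul_eq_nsmul]
  lie_h_f_nsmul := by
    have hα' := C.neg_mem α hα
    rw [← neg_neg (C.H α), ← H_neg hα, neg_lie, lie_H_X_self hα', ofNat_smul_eq_nsmul]

theorem lie_H_lie_X_X (hγ : γ ∈ C.roots) (hα : α ∈ C.roots) (hβ : β ∈ C.roots) :
    ⁅C.H γ, ⁅C.X α, C.X β⁆⁆ = ((C.pair α γ + C.pair β γ : ℤ) : ℂ) • ⁅C.X α, C.X β⁆ := by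
  rw [leibniz_lie, C.lie_H_X γ hγ α hα, C.lie_H_X γ hγ β hβ, smul_lie, lie_smul, ← add_smul]
  push_cast
  rfl

theorem pair_neg (hα : α ∈ C.roots) (hγ : γ ∈ C.roots) : C.pair (-α) γ = -C.pair α γ := by
  have h := lie_H_lie_X_X hγ hα (C.neg_mem α hα)
  rw [C.coroot_def α hα, C.lie_H_H γ hγ α hα, eq_comm, smul_eq_zero_iff_left (H_ne_zero hα),
    Int.cast_eq_zero] at h
  exact eq_neg_of_add_eq_zero_right h

theorem lie_X_X_neg_eq_zero (hα : α ∈ C.roots) (hβ : β ∈ C.roots) (hne : α ≠ β)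
    (hpair : ∀ γ ∈ C.roots, C.pair α γ = C.pair β γ) : ⁅C.X α, C.X (-β)⁆ = 0 := by
  have hβ' := C.neg_mem β hβ
  by_cases hγ : α + -β ∈ C.roots
  · have hweight : ⁅C.H (α + -β), ⁅C.X α, C.X (-β)⁆⁆ = 0 := by
      rw [lie_H_lie_X_X hγ hα hβ', pair_neg hβ hγ, hpair _ hγ, add_neg_cancel, Int.cast_zero,
        zero_smul]
    rw [C.lie_X_X_of_mem α hα _ hβ' hγ] at hweight ⊢
    rw [lie_smul, smul_eq_zero_iff_left (lie_H_X_self_ne_zero hγ)] at hweight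
    rw [hweight, zero_smul]
  · exact C.lie_X_X_of_not_mem α hα _ hβ' hγ (by rwa [← sub_eq_add_neg, sub_ne_zero])

theorem eq_of_forall_pair_eq [Module.Finite ℂ 𝔤] (hα : α ∈ C.roots) (hβ : β ∈ C.roots)
    (hpair : ∀ γ ∈ C.roots, C.pair α γ = C.pair β γ) : α = β := by
  by_contra hne
  have hβ' := C.neg_mem β hβ
  have hprim : (isSl2Triple hβ').HasPrimitiveVectorWith (C.X α) (-2 : ℂ) :=
    { ne_zero := C.X_ne_zero α hα
      lie_h := by
        rw [H_neg hβ, neg_lie, C.lie_H_X β hβ α hα, hpair β hβ, C.pair_self β hβ]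
        simp
      lie_e := by rw [← lie_skew, lie_X_X_neg_eq_zero hα hβ hne hpair, neg_zero] }
  obtain ⟨n, hn⟩ := hprim.exists_nat
  have : (-2 : ℤ) = n := by exact_mod_cast hn
  lia

end Relations

section Cartan

variable {C} {α : V} (R : Type*) [CommRing R] [Module R 𝔤]

variable (C) in
/-- The `R`-span of the coroot elements `H α`. For `R = ℂ` it is the Cartan subalgebra, and for
`R = ℝ` the real form of it on which all roots take real values. -/
def corootSpan : Submodule R 𝔤 := Submodule.span R (C.H '' C.roots)

variable {R} {h : 𝔤}

theorem H_mem_corootSpan (hα : α ∈ C.roots) : C.H α ∈ C.corootSpan R :=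
  Submodule.subset_span ⟨α, hα, rfl⟩

theorem lie_H_eq_zero_of_mem_corootSpan {β : V} (hh : h ∈ C.corootSpan ℂ) (hβ : β ∈ C.roots) :
    ⁅h, C.H β⁆ = 0 := by
  have hle : C.corootSpan ℂ ≤ LinearMap.ker (ad ℂ 𝔤 (C.H β)) := by
    rw [corootSpan, Submodule.span_le]
    rintro _ ⟨α, hα, rfl⟩
    exact C.lie_H_H β hβ α hα
  rw [← lie_skew, neg_eq_zero]
  exact hle hh

variable [Algebra R ℂ] [IsScalarTower R ℂ 𝔤]

theorem exists_lie_eq_smul_of_mem_corootSpan (hh : h ∈ C.corootSpan R) {v : 𝔤}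
    (hv : v ∈ C.X '' C.roots ∪ C.H '' C.roots) : ∃ r : R, ⁅h, v⁆ = r • v := by
  induction hh using Submodule.span_induction with
  | mem _ hH =>
    obtain ⟨α, hα, rfl⟩ := hH
    rcases hv with ⟨β, hβ, rfl⟩ | ⟨β, hβ, rfl⟩
    · exact ⟨C.pair β α, by
        rw [C.lie_H_X α hα β hβ, Int.cast_smul_eq_zsmul, Int.cast_smul_eq_zsmul]⟩
    · exact ⟨0, by rw [C.lie_H_H α hα β hβ, zero_smul]⟩
  | zero => exact ⟨0, by rw [zero_lie, zero_smul]⟩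
  | add x y _ _ hx hy =>
    obtain ⟨r, hr⟩ := hx
    obtain ⟨s, hs⟩ := hy
    exact ⟨r + s, by rw [add_lie, hr, hs, add_smul]⟩
  | smul a x _ hx =>
    obtain ⟨r, hr⟩ := hx
    exact ⟨a * r, by rw [← algebraMap_smul ℂ a x, smul_lie, hr, algebraMap_smul, mul_smul]⟩

end Cartan

section KillingForm

variable {C} {α β : V} {h : 𝔤} {c : V →₀ ℂ}

theorem killingForm_X_eq_zero_of_mem_corootSpan (hh : h ∈ C.corootSpan ℂ) (hβ : β ∈ C.roots) :
    killingForm ℂ 𝔤 h (C.X β) = 0 := by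
  have hinv := LieModule.traceForm_apply_lie_apply ℂ 𝔤 𝔤 h (C.H β) (C.X β)
  rw [lie_H_eq_zero_of_mem_corootSpan hh hβ, lie_H_X_self hβ, map_zero, LinearMap.zero_apply,
    map_smul] at hinv
  exact (smul_eq_zero.1 hinv.symm).resolve_left two_ne_zero

theorem killingForm_linearCombination_X_eq_zero_of_mem_corootSpan (hh : h ∈ C.corootSpan ℂ)
    (hc : c ∈ Finsupp.supported ℂ ℂ C.roots) :
    killingForm ℂ 𝔤 h (Finsupp.linearCombination ℂ C.X c) = 0 := by
  rw [Finsupp.linearCombination_apply, Finsupp.sum, map_sum]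
  refine Finset.sum_eq_zero fun β hβ ↦ ?_
  rw [map_smul, killingForm_X_eq_zero_of_mem_corootSpan hh (hc hβ), smul_zero]

theorem killingForm_linearCombination_X_add_I_smul_self (hh : h ∈ C.corootSpan ℂ)
    (hc : c ∈ Finsupp.supported ℂ ℂ C.roots) :
    killingForm ℂ 𝔤 (Finsupp.linearCombination ℂ C.X c + Complex.I • h)
        (Finsupp.linearCombination ℂ C.X c + Complex.I • h) =
      killingForm ℂ 𝔤 (Finsupp.linearCombination ℂ C.X c) (Finsupp.linearCombination ℂ C.X c) -
        killingForm ℂ 𝔤 h h := by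
  have hhc := killingForm_linearCombination_X_eq_zero_of_mem_corootSpan hh hc
  have hch := (LieModule.traceForm_comm ℂ 𝔤 𝔤 _ _).trans hhc
  simp only [map_add, map_smul, LinearMap.add_apply, LinearMap.smul_apply, smul_eq_mul, hhc, hch]
  linear_combination killingForm ℂ 𝔤 h h * Complex.I_mul_I

variable [Module.Finite ℂ 𝔤]

theorem killingForm_self_pos_of_ad_ne_zero [Module ℝ 𝔤] [IsScalarTower ℝ ℂ 𝔤]
    (hh : h ∈ C.corootSpan ℝ) (had : ad ℂ 𝔤 h ≠ 0) : 0 < killingForm ℂ 𝔤 h h := by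
  rw [killingForm_apply_apply]
  refine trace_comp_self_pos_of_real_eigenvectors C.span_eq_top (fun v hv ↦ ?_) had
  obtain ⟨r, hr⟩ := exists_lie_eq_smul_of_mem_corootSpan hh hv
  exact ⟨r, by rw [ad_apply, hr, ← algebraMap_smul ℂ r v, RCLike.algebraMap_eq_ofReal]⟩

theorem killingForm_X_X_neg_pos (hα : α ∈ C.roots) :
    0 < killingForm ℂ 𝔤 (C.X α) (C.X (-α)) := by
  have hpos : 0 < killingForm ℂ 𝔤 (C.H α) (C.H α) :=
    killingForm_self_pos_of_ad_ne_zero (H_mem_corootSpan hα)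
      fun had ↦ lie_H_X_self_ne_zero hα congr($had (C.X α))
  have hinv := LieModule.traceForm_apply_lie_apply ℂ 𝔤 𝔤 (C.H α) (C.X α) (C.X (-α))
  rw [C.coroot_def α hα, lie_H_X_self hα, map_smul, LinearMap.smul_apply, smul_eq_mul] at hinv
  rw [← hinv] at hpos
  exact pos_of_mul_pos_right hpos zero_le_two

theorem killingForm_X_X_eq_zero (hα : α ∈ C.roots) (hβ : β ∈ C.roots) (hne : α ≠ -β) :
    killingForm ℂ 𝔤 (C.X α) (C.X β) = 0 := by
  obtain ⟨γ, hγ, hpair⟩ : ∃ γ ∈ C.roots, C.pair α γ ≠ -C.pair β γ := by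
    by_contra! hpair
    exact hne (eq_of_forall_pair_eq hα (C.neg_mem β hβ) fun γ hγ ↦ by
      rw [hpair γ hγ, pair_neg hβ hγ])
  have hinv := LieModule.traceForm_apply_lie_apply' ℂ 𝔤 𝔤 (C.H γ) (C.X α) (C.X β)
  rw [C.lie_H_X γ hγ α hα, C.lie_H_X γ hγ β hβ, map_smul, map_smul, LinearMap.smul_apply,
    smul_eq_mul, smul_eq_mul, ← neg_mul] at hinv
  refine (mul_eq_mul_right_iff.1 hinv).resolve_left fun heq ↦ hpair ?_
  exact_mod_cast heq

theorem killingForm_linearCombination_X (hc : c ∈ Finsupp.supported ℂ ℂ C.roots)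
    (hβ : β ∈ C.roots) : killingForm ℂ 𝔤 (Finsupp.linearCombination ℂ C.X c) (C.X β) =
      c (-β) * killingForm ℂ 𝔤 (C.X β) (C.X (-β)) := by
  rw [Finsupp.linearCombination_apply, Finsupp.sum, map_sum, LinearMap.sum_apply,
    Finset.sum_eq_single (-β)]
  · rw [map_smul, LinearMap.smul_apply, smul_eq_mul, LieModule.traceForm_comm]
  · intro α hα hne
    rw [map_smul, LinearMap.smul_apply, killingForm_X_X_eq_zero (hc hα) hβ hne, smul_zero]
  · intro hβc
    rw [Finsupp.notMem_support_iff.1 hβc, zero_smul, map_zero, LinearMap.zero_apply]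

end KillingForm

section IsKilling

theorem lie_top_top_eq_top (C : ChevalleyBasis V 𝔤) :
    ⁅(⊤ : LieIdeal ℂ 𝔤), (⊤ : LieIdeal ℂ 𝔤)⁆ = ⊤ := by
  rw [← LieSubmodule.toSubmodule_inj, LieSubmodule.top_toSubmodule, eq_top_iff, ← C.span_eq_top,
    Submodule.span_le]
  have hlie (x y : 𝔤) : ⁅x, y⁆ ∈ ⁅(⊤ : LieIdeal ℂ 𝔤), (⊤ : LieIdeal ℂ 𝔤)⁆ :=
    LieSubmodule.lie_mem_lie trivial trivial
  rintro _ (⟨α, hα, rfl⟩ | ⟨α, hα, rfl⟩)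
  · have hX := lie_H_X_self hα ▸ hlie (C.H α) (C.X α)
    exact (Submodule.smul_mem_iff _ two_ne_zero).1 hX
  · exact C.coroot_def α hα ▸ hlie (C.X α) (C.X (-α))

theorem exists_eq_linearCombination_X_add (C : ChevalleyBasis V 𝔤) (x : 𝔤) :
    ∃ c ∈ Finsupp.supported ℂ ℂ C.roots, ∃ h ∈ C.corootSpan ℂ,
      Finsupp.linearCombination ℂ C.X c + h = x := by
  have hx : x ∈ Submodule.span ℂ (C.X '' C.roots ∪ C.H '' C.roots) := C.span_eq_top ▸ trivial
  rw [Submodule.span_union, Finsupp.span_image_eq_map_linearCombination] at hx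
  simpa only [corootSpan, Submodule.mem_sup, Submodule.mem_map, exists_exists_and_eq_and] using hx

variable [Module.Finite ℂ 𝔤]

theorem mem_center_of_mem_corootSpan {C : ChevalleyBasis V 𝔤} {h : 𝔤} (hh : h ∈ C.corootSpan ℂ)
    (hκ : ∀ β ∈ C.roots, killingForm ℂ 𝔤 h (C.H β) = 0) : h ∈ center ℂ 𝔤 := by
  suffices had : ad ℂ 𝔤 h = 0 from fun y ↦ by
    rw [← lie_skew, ← ad_apply ℂ, had, LinearMap.zero_apply, neg_zero]
  refine LinearMap.ext_on C.span_eq_top ?_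
  rintro _ (⟨β, hβ, rfl⟩ | ⟨β, hβ, rfl⟩)
  · obtain ⟨μ, hμ⟩ := exists_lie_eq_smul_of_mem_corootSpan hh (.inl ⟨β, hβ, rfl⟩)
    have hinv := LieModule.traceForm_apply_lie_apply ℂ 𝔤 𝔤 h (C.X β) (C.X (-β))
    rw [hμ, C.coroot_def β hβ, hκ β hβ, map_smul, LinearMap.smul_apply,
      smul_eq_zero_iff_left (killingForm_X_X_neg_pos hβ).ne'] at hinv
    rw [ad_apply, hμ, hinv, zero_smul, LinearMap.zero_apply]
  · exact lie_H_eq_zero_of_mem_corootSpan hh hβ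

theorem killingCompl_top_le_center (C : ChevalleyBasis V 𝔤) :
    LieIdeal.killingCompl ℂ 𝔤 ⊤ ≤ center ℂ 𝔤 := by
  intro x hx
  obtain ⟨c, hc, h, hh, rfl⟩ := C.exists_eq_linearCombination_X_add x
  have hκ (y : 𝔤) : killingForm ℂ 𝔤 (Finsupp.linearCombination ℂ C.X c + h) y = 0 := by
    rw [LieModule.traceForm_comm]
    exact (LieIdeal.mem_killingCompl ℂ 𝔤 ⊤).1 hx y trivial
  have hc0 : c = 0 := by
    ext α
    by_cases hα : α ∈ C.roots
    · have hα' := C.neg_mem α hα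
      have h0 := hκ (C.X (-α))
      rw [map_add, LinearMap.add_apply, killingForm_linearCombination_X hc hα',
        killingForm_X_eq_zero_of_mem_corootSpan hh hα', add_zero, neg_neg] at h0
      have hne := (killingForm_X_X_neg_pos hα').ne'
      rw [neg_neg] at hne
      exact (mul_eq_zero.1 h0).resolve_right hne
    · exact Finsupp.notMem_support_iff.1 fun hαc ↦ hα (hc hαc)
  simp only [hc0, map_zero, zero_add] at hκ ⊢
  exact mem_center_of_mem_corootSpan hh fun β _ ↦ hκ (C.H β)

theorem isKilling (C : ChevalleyBasis V 𝔤) : IsKilling ℂ 𝔤 :=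
  isKilling_of_perfect_of_killingCompl_le_center C.lie_top_top_eq_top C.killingCompl_top_le_center

end IsKilling

section CompactForm

variable {C} {h x : 𝔤} {c : V →₀ ℂ}

variable (C) in
/-- The families `c` on the roots for which `∑ c α • X α` is fixed by the conjugate-linear map
`X α ↦ -X (-α)`: they are the root parts of the elements of the compact real form. -/
def skewCoeffs : Submodule ℝ (V →₀ ℂ) where
  carrier := {c | c ∈ Finsupp.supported ℂ ℂ C.roots ∧ ∀ α, c (-α) = -conj (c α)}
  zero_mem' := ⟨zero_mem _, by simp⟩
  add_mem' ha hb := ⟨add_mem ha.1 hb.1, fun α ↦ by simp [ha.2 α, hb.2 α, add_comm]⟩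
  smul_mem' r a ha := ⟨Submodule.smul_of_tower_mem _ r ha.1, fun α ↦ by simp [ha.2 α]⟩

theorem single_sub_single_neg_mem_skewCoeffs {α : V} (hα : α ∈ C.roots) (a : ℂ) :
    Finsupp.single α a - Finsupp.single (-α) (conj a) ∈ C.skewCoeffs := by
  classical
  refine ⟨sub_mem (Finsupp.single_mem_supported ℂ a hα)
    (Finsupp.single_mem_supported ℂ _ (C.neg_mem α hα)), fun β ↦ ?_⟩
  simp only [Finsupp.sub_apply, Finsupp.single_apply, neg_eq_iff_eq_neg, neg_neg]
  split_ifs <;> simp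

section Real

variable [Module ℝ 𝔤] [IsScalarTower ℝ ℂ 𝔤]

theorem exists_eq_linearCombination_X_add_I_smul
    (hx : x ∈ Submodule.span ℝ (compactFormGenerators C)) :
    ∃ c ∈ C.skewCoeffs, ∃ h ∈ C.corootSpan ℝ,
      Finsupp.linearCombination ℂ C.X c + Complex.I • h = x := by
  let rootPart := C.skewCoeffs.map ((Finsupp.linearCombination ℂ C.X).restrictScalars ℝ)
  let torus := (C.corootSpan ℝ).map ((LinearMap.lsmul ℂ 𝔤 Complex.I).restrictScalars ℝ)
  have hroot {α : V} (hα : α ∈ C.posRoots) (a : ℂ) : a • C.X α - conj a • C.X (-α) ∈ rootPart :=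
    ⟨_, single_sub_single_neg_mem_skewCoeffs (C.posRoots_subset hα) a, by simp⟩
  have hle : Submodule.span ℝ (compactFormGenerators C) ≤ rootPart ⊔ torus := by
    rw [Submodule.span_le]
    rintro _ ((⟨α, hα, rfl⟩ | ⟨α, hα, rfl⟩) | ⟨α, hα, rfl⟩)
    · exact Submodule.mem_sup_left (by simpa using hroot hα 1)
    · exact Submodule.mem_sup_left (by simpa using hroot hα Complex.I)
    · exact Submodule.mem_sup_right
        ⟨C.H α, H_mem_corootSpan (C.posRoots_subset (C.simples_subset hα)), rfl⟩
  simpa [rootPart, torus, Submodule.mem_sup] using hle hx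

theorem mem_corootSpan_complex_of_mem_corootSpan_real (hh : h ∈ C.corootSpan ℝ) :
    h ∈ C.corootSpan ℂ :=
  Submodule.span_subset_span ℝ ℂ _ hh

end Real

variable [Module.Finite ℂ 𝔤]

theorem killingForm_self_pos_of_mem_corootSpan [Module ℝ 𝔤] [IsScalarTower ℝ ℂ 𝔤]
    (hh : h ∈ C.corootSpan ℝ) (hh0 : h ≠ 0) : 0 < killingForm ℂ 𝔤 h h := by
  have := C.isKilling
  refine killingForm_self_pos_of_ad_ne_zero hh fun had ↦ hh0 ?_
  rwa [← LieHom.mem_ker, ad_ker_eq_bot_of_hasTrivialRadical, LieSubmodule.mem_bot] at had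

theorem killingForm_linearCombination_X_self (hc : c ∈ C.skewCoeffs) :
    killingForm ℂ 𝔤 (Finsupp.linearCombination ℂ C.X c) (Finsupp.linearCombination ℂ C.X c) =
      -c.sum fun α a ↦ conj a * a * killingForm ℂ 𝔤 (C.X α) (C.X (-α)) := by
  nth_rw 2 [Finsupp.linearCombination_apply]
  rw [map_finsuppSum, Finsupp.sum, Finsupp.sum, ← Finset.sum_neg_distrib]
  refine Finset.sum_congr rfl fun α hα ↦ ?_
  rw [map_smul, killingForm_linearCombination_X hc.1 (hc.1 hα), hc.2 α, smul_eq_mul]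
  ring

theorem killingForm_linearCombination_X_self_neg (hc : c ∈ C.skewCoeffs) (hc0 : c ≠ 0) :
    killingForm ℂ 𝔤 (Finsupp.linearCombination ℂ C.X c)
      (Finsupp.linearCombination ℂ C.X c) < 0 := by
  rw [killingForm_linearCombination_X_self hc, neg_lt_zero]
  refine Finset.sum_pos (fun α hα ↦ mul_pos ?_ (killingForm_X_X_neg_pos (hc.1 hα)))
    (Finsupp.support_nonempty_iff.2 hc0)
  exact star_mul_self_pos (.of_ne_zero (Finsupp.mem_support_iff.1 hα))

end CompactForm

end ChevalleyBasis

open ChevalleyBasis in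
theorem killingForm_negative_definite_on_compact_form_general {V 𝔤 : Type*} [AddCommGroup V]
    [Module ℝ V] [LieRing 𝔤] [LieAlgebra ℂ 𝔤] [Module ℝ 𝔤] [IsScalarTower ℝ ℂ 𝔤]
    [Module.Finite ℂ 𝔤] {C : ChevalleyBasis V 𝔤} {x : 𝔤}
    (hx : x ∈ Submodule.span ℝ (compactFormGenerators C)) (hx0 : x ≠ 0) :
    killingForm ℂ 𝔤 x x < 0 := by
  obtain ⟨c, hc, h, hh, rfl⟩ := exists_eq_linearCombination_X_add_I_smul hx
  rw [killingForm_linearCombination_X_add_I_smul_self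
    (mem_corootSpan_complex_of_mem_corootSpan_real hh) hc.1]
  obtain rfl | hh0 := eq_or_ne h 0
  · have hc0 : c ≠ 0 := by
      rintro rfl
      simp at hx0
    simpa using killingForm_linearCombination_X_self_neg hc hc0
  · have hpos := killingForm_self_pos_of_mem_corootSpan hh hh0
    obtain rfl | hc0 := eq_or_ne c 0
    · simpa using hpos
    · exact sub_neg.2 ((killingForm_linearCombination_X_self_neg hc hc0).trans hpos)

open LieAlgebra in
/-- The Killing form of a complex semisimple Lie algebra takes negative real values on the
nonzero elements of the compact real form `u` spanned over `ℝ` by `X_α - X_{-α}`,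
`i(X_α + X_{-α})` (`α` positive) and `i H_α` (`α` simple): it is negative definite on `u` as a
real bilinear form. -/
theorem killingForm_negative_definite_on_compact_form
    (C : ChevalleyBasis V L)
    (hN : ∀ α β : V, C.N α β = -(C.N (-α) (-β))) :
    ∀ x ∈ Submodule.span ℝ (compactFormGenerators C), x ≠ 0 →
      ∃ r : ℝ, r < 0 ∧
        LinearMap.trace ℂ L ((ad ℂ L x) ∘ₗ (ad ℂ L x)) = (r : ℂ) := by
  intro x hx hx0
  obtain ⟨r, hr, hκ⟩ := RCLike.neg_iff_exists_ofReal.1 <|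
    killingForm_negative_definite_on_compact_form_general hx hx0
  exact ⟨r, hr, hκ.symm⟩
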